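/- Let N ≥ 2, p > 1 and σ > 0. Let α ∈ (0,1) and let w ∈ C^α(ℝ^N) ∩ C_0(ℝ^N) ∩ L¹(ℝ^N) satisfy ∫_{ℝ^N} w(x) dx > 0. Then for every u_0 ∈ C_0(ℝ^N) there is no global mild solution of ∂_t u = Δu + |u|^p + t^σ w(x) with initial data u_0; equivalently, every mild solution blows up in finite time. -/

import Mathlib

open MeasureTheory Filter Set
open scoped ENNReal NNReal ZeroAtInfty

noncomputable section

abbrev Eu (N : ℕ) := EuclideanSpace ℝ (Fin N)

noncomputable def heatSG (N : ℕ) (t : ℝ) (φ : Eu N → ℝ) (x : Eu N) : ℝ :=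
  if t ≤ 0 then φ x
  else ∫ y, (4 * Real.pi * t) ^ (-(N : ℝ) / 2) * Real.exp (-‖x - y‖ ^ 2 / (4 * t)) * φ y

def IsC0 {N : ℕ} (φ : Eu N → ℝ) : Prop :=
  Continuous φ ∧ Tendsto φ (cocompact (Eu N)) (nhds 0)

def IsHolder {N : ℕ} (α : ℝ) (φ : Eu N → ℝ) : Prop :=
  ∃ C : ℝ≥0, HolderWith C α.toNNReal φ

def IsMildSolution (N : ℕ) (p σ : ℝ) (u₀ w : Eu N → ℝ) (T : ℝ)
    (u : ℝ → C₀(Eu N, ℝ)) : Prop :=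
  ContinuousOn u (Icc 0 T) ∧
  ∀ t ∈ Icc (0:ℝ) T, ∀ x,
    u t x = heatSG N t u₀ x
      + ∫ s in (0:ℝ)..t, heatSG N (t - s) (fun y => |u s y| ^ p + s ^ σ * w y) x

def IsGlobalMildSolution (N : ℕ) (p σ : ℝ) (u₀ w : Eu N → ℝ)
    (u : ℝ → C₀(Eu N, ℝ)) : Prop :=
  ContinuousOn u (Ici 0) ∧
  ∀ t ∈ Ici (0:ℝ), ∀ x,
    u t x = heatSG N t u₀ x
      + ∫ s in (0:ℝ)..t, heatSG N (t - s) (fun y => |u s y| ^ p + s ^ σ * w y) x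

/-!
Fix a mild solution `u` on `[0, T]` and `τ > T`, and average `u t` against the heat kernel running
backwards from time `τ`: `h t = (e^{(τ - t)Δ} u t) 0`. By the semigroup property the Duhamel formula
becomes `h t = (e^{τΔ} u₀) 0 + ∫₀ᵗ (e^{(τ - s)Δ} (|u s|^p + s^σ w)) 0 ds`, and Jensen's inequality
gives `h' ≥ |h|^p + t^σ (e^{(τ - t)Δ} w) 0`.

Since `∫ w > 0`, there is `R` such that `(e^{rΔ} w) 0 > 0` for all `r ≥ R`. Take `τ = R + T`.
Then `h` is nondecreasing, so it never falls below a lower bound of `u₀`, and on `[T - 2, T]` the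
forcing is at least `c (T - 2)^σ` with `c > 0` independent of `T`. As `σ > 0`, this makes
`h (T - 1)` arbitrarily large, whereas a solution of `h' ≥ |h|^p` with large initial value cannot
survive a unit of time.
-/

section HeatKernel

variable {N : ℕ} {a b r t : ℝ}

/-- The Gauss–Weierstrass kernel, the convolution kernel of `heatSG N t` for `0 < t`. -/
def heatKernel (t : ℝ) (z : Eu N) : ℝ :=
  (4 * Real.pi * t) ^ (-(N : ℝ) / 2) * Real.exp (-‖z‖ ^ 2 / (4 * t))

lemma heatKernel_pos (ht : 0 < t) (z : Eu N) : 0 < heatKernel t z := by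
  unfold heatKernel
  positivity

lemma continuous_heatKernel (t : ℝ) : Continuous (heatKernel (N := N) t) := by
  unfold heatKernel
  fun_prop

lemma measurable_heatKernel : Measurable fun q : ℝ × Eu N ↦ heatKernel q.1 q.2 := by
  unfold heatKernel
  fun_prop

lemma continuousAt_heatKernel (ht : 0 < t) (z : Eu N) :
    ContinuousAt (fun t ↦ heatKernel t z) t := by
  unfold heatKernel
  have hpow : ContinuousAt (fun t : ℝ ↦ (4 * Real.pi * t) ^ (-(N : ℝ) / 2)) t :=
    ContinuousAt.rpow_const (by fun_prop) (.inl (by positivity))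
  have hexp : ContinuousAt (fun t : ℝ ↦ -‖z‖ ^ 2 / (4 * t)) t :=
    ContinuousAt.div (by fun_prop) (by fun_prop) (by positivity)
  exact hpow.mul hexp.rexp

lemma integral_heatKernel (ht : 0 < t) : ∫ z : Eu N, heatKernel t z = 1 := by
  have hexp (z : Eu N) : -‖z‖ ^ 2 / (4 * t) = -(1 / (4 * t)) * ‖z‖ ^ 2 := by ring
  simp only [heatKernel, hexp]
  rw [integral_const_mul, GaussianFourier.integral_rexp_neg_mul_sq_norm (by positivity),
    finrank_euclideanSpace_fin, show Real.pi / (1 / (4 * t)) = 4 * Real.pi * t by field_simp,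
    ← Real.rpow_add (by positivity), neg_div, neg_add_cancel, Real.rpow_zero]

lemma integrable_heatKernel (ht : 0 < t) : Integrable (heatKernel (N := N) t) :=
  .of_integral_ne_zero (by simp [integral_heatKernel ht])

lemma heatKernel_le_of_le (ha : 0 < a) (hat : a ≤ t) (htb : t ≤ b) (z : Eu N) :
    heatKernel t z ≤ (b / a) ^ ((N : ℝ) / 2) * heatKernel b z := by
  have ht : 0 < t := ha.trans_le hat
  have hb : 0 < b := ht.trans_le htb
  have hratio : (b / a) ^ ((N : ℝ) / 2) * (4 * Real.pi * b) ^ (-(N : ℝ) / 2)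
      = (4 * Real.pi * a) ^ (-(N : ℝ) / 2) := by
    rw [show b / a = (4 * Real.pi * b) / (4 * Real.pi * a) by field_simp,
      Real.div_rpow (by positivity) (by positivity), neg_div, Real.rpow_neg (by positivity),
      Real.rpow_neg (by positivity)]
    field_simp
  have hpow : (4 * Real.pi * t) ^ (-(N : ℝ) / 2) ≤ (4 * Real.pi * a) ^ (-(N : ℝ) / 2) :=
    Real.rpow_le_rpow_of_nonpos (by positivity) (by gcongr)
      (div_nonpos_of_nonpos_of_nonneg (by simp) zero_le_two)
  have hexp : -‖z‖ ^ 2 / (4 * t) ≤ -‖z‖ ^ 2 / (4 * b) := by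
    rw [neg_div, neg_div, neg_le_neg_iff]
    gcongr
  rw [heatKernel, heatKernel, ← mul_assoc, hratio]
  gcongr

-- Completing the square in `z`.
lemma heatKernel_mul_heatKernel_sub (hr : 0 < r) (ht : 0 < t) (y z : Eu N) :
    heatKernel r z * heatKernel t (y - z)
      = heatKernel (r + t) y * heatKernel (r * t / (r + t)) (z - (r / (r + t)) • y) := by
  have hexp : -‖z‖ ^ 2 / (4 * r) + -‖y - z‖ ^ 2 / (4 * t)
      = -‖y‖ ^ 2 / (4 * (r + t))
        + -‖z - (r / (r + t)) • y‖ ^ 2 / (4 * (r * t / (r + t))) := by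
    rw [norm_sub_sq_real, norm_sub_sq_real, inner_smul_right, norm_smul, Real.norm_eq_abs,
      abs_of_pos (by positivity), real_inner_comm]
    field_simp
    ring
  have hpow : (4 * Real.pi * r) ^ (-(N : ℝ) / 2) * (4 * Real.pi * t) ^ (-(N : ℝ) / 2)
      = (4 * Real.pi * (r + t)) ^ (-(N : ℝ) / 2)
        * (4 * Real.pi * (r * t / (r + t))) ^ (-(N : ℝ) / 2) := by
    rw [← Real.mul_rpow (by positivity) (by positivity),
      ← Real.mul_rpow (by positivity) (by positivity)]
    congr 1
    field_simp
  simp only [heatKernel]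
  rw [mul_mul_mul_comm, hpow, ← Real.exp_add, hexp, Real.exp_add, mul_mul_mul_comm]

lemma integral_heatKernel_sub_mul_heatKernel_sub (hr : 0 < r) (ht : 0 < t) (x y : Eu N) :
    ∫ z, heatKernel r (x - z) * heatKernel t (z - y) = heatKernel (r + t) (x - y) := calc
  ∫ z, heatKernel r (x - z) * heatKernel t (z - y)
    = ∫ z, heatKernel r (x - z) * heatKernel t (x - y - (x - z)) := by
        simp only [sub_sub_sub_cancel_left]
  _ = ∫ z, heatKernel r z * heatKernel t (x - y - z) :=
        integral_sub_left_eq_self (fun z ↦ heatKernel r z * heatKernel t (x - y - z)) volume x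
  _ = heatKernel (r + t) (x - y) := by
        simp only [heatKernel_mul_heatKernel_sub hr ht]
        rw [integral_const_mul, integral_sub_right_eq_self (heatKernel (r * t / (r + t))),
          integral_heatKernel (by positivity), mul_one]

lemma integrable_heatKernel_sub_mul_heatKernel_sub (hr : 0 < r) (ht : 0 < t) (x y : Eu N) :
    Integrable fun z ↦ heatKernel r (x - z) * heatKernel t (z - y) :=
  .of_integral_ne_zero <| by
    rw [integral_heatKernel_sub_mul_heatKernel_sub hr ht]
    exact (heatKernel_pos (by positivity) _).ne'

end HeatKernel

section HeatMeasure

variable {N : ℕ} {t : ℝ} {x : Eu N} {φ ψ w : Eu N → ℝ}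

/-- The Gaussian probability measure with density `heatKernel t (x - ·)`, so that for `0 < t` the
number `heatSG N t φ x` is the mean of `φ`. Integrability with respect to it is the condition under
which `heatSG N t φ x` is meaningful. -/
def heatMeasure (t : ℝ) (x : Eu N) : Measure (Eu N) :=
  volume.withDensity fun y ↦ ENNReal.ofReal (heatKernel t (x - y))

lemma measurable_ofReal_heatKernel_sub (t : ℝ) (x : Eu N) :
    Measurable fun y ↦ ENNReal.ofReal (heatKernel t (x - y)) :=
  ((continuous_heatKernel t).comp (continuous_const.sub continuous_id)).measurable.ennreal_ofReal

lemma isProbabilityMeasure_heatMeasure (ht : 0 < t) (x : Eu N) :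
    IsProbabilityMeasure (heatMeasure t x) := by
  constructor
  rw [heatMeasure, withDensity_apply _ .univ, Measure.restrict_univ,
    ← ofReal_integral_eq_lintegral_ofReal ((integrable_heatKernel ht).comp_sub_left x)
      (.of_forall fun y ↦ (heatKernel_pos ht _).le),
    integral_sub_left_eq_self (heatKernel t), integral_heatKernel ht, ENNReal.ofReal_one]

lemma volume_absolutelyContinuous_heatMeasure (ht : 0 < t) (x : Eu N) :
    volume ≪ heatMeasure t x :=
  withDensity_absolutelyContinuous' (measurable_ofReal_heatKernel_sub t x).aemeasurable
    (.of_forall fun _ ↦ (ENNReal.ofReal_pos.mpr (heatKernel_pos ht _)).ne')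

lemma integrable_heatMeasure_iff (ht : 0 < t) :
    Integrable φ (heatMeasure t x) ↔ Integrable fun y ↦ heatKernel t (x - y) * φ y := by
  rw [heatMeasure, integrable_withDensity_iff_integrable_smul'
    (measurable_ofReal_heatKernel_sub t x) (.of_forall fun _ ↦ ENNReal.ofReal_lt_top)]
  simp only [ENNReal.toReal_ofReal (heatKernel_pos ht _).le, smul_eq_mul]

lemma heatSG_of_pos (ht : 0 < t) (φ : Eu N → ℝ) (x : Eu N) :
    heatSG N t φ x = ∫ y, heatKernel t (x - y) * φ y :=
  if_neg ht.not_ge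

lemma heatSG_of_nonpos (ht : t ≤ 0) (φ : Eu N → ℝ) : heatSG N t φ = φ :=
  funext fun _ ↦ if_pos ht

lemma heatSG_eq_integral_heatMeasure (ht : 0 < t) (φ : Eu N → ℝ) (x : Eu N) :
    heatSG N t φ x = ∫ y, φ y ∂heatMeasure t x := by
  rw [heatSG_of_pos ht, heatMeasure, integral_withDensity_eq_integral_toReal_smul
    (measurable_ofReal_heatKernel_sub t x) (.of_forall fun _ ↦ ENNReal.ofReal_lt_top)]
  simp only [ENNReal.toReal_ofReal (heatKernel_pos ht _).le, smul_eq_mul]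

lemma integrable_heatMeasure_of_integrable (hw : Integrable w) (ht : 0 < t) (x : Eu N) :
    Integrable w (heatMeasure t x) := by
  rw [integrable_heatMeasure_iff ht]
  refine hw.bdd_mul (c := (4 * Real.pi * t) ^ (-(N : ℝ) / 2))
    ((continuous_heatKernel t).comp (continuous_const.sub continuous_id)).aestronglyMeasurable
    (.of_forall fun y ↦ ?_)
  rw [Real.norm_of_nonneg (heatKernel_pos ht _).le]
  refine mul_le_of_le_one_right (by positivity) (Real.exp_le_one_iff.mpr ?_)
  rw [neg_div, neg_nonpos]
  positivity

lemma heatSG_add (ht : 0 < t) (hφ : Integrable φ (heatMeasure t x))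
    (hψ : Integrable ψ (heatMeasure t x)) :
    heatSG N t (φ + ψ) x = heatSG N t φ x + heatSG N t ψ x := by
  simp only [heatSG_eq_integral_heatMeasure ht]
  exact integral_add hφ hψ

lemma heatSG_const_mul (c t : ℝ) (φ : Eu N → ℝ) (x : Eu N) :
    heatSG N t (fun y ↦ c * φ y) x = c * heatSG N t φ x := by
  rcases le_or_gt t 0 with ht | ht
  · simp only [heatSG_of_nonpos ht]
  · simp only [heatSG_eq_integral_heatMeasure ht, integral_const_mul]

lemma heatSG_mono (ht : 0 < t) (hφ : Integrable φ (heatMeasure t x))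
    (hψ : Integrable ψ (heatMeasure t x)) (h : ∀ y, φ y ≤ ψ y) :
    heatSG N t φ x ≤ heatSG N t ψ x := by
  simp only [heatSG_eq_integral_heatMeasure ht]
  exact integral_mono hφ hψ h

lemma le_heatSG {m : ℝ} (ht : 0 < t) (hφ : Integrable φ (heatMeasure t x)) (h : ∀ y, m ≤ φ y) :
    m ≤ heatSG N t φ x := by
  have := isProbabilityMeasure_heatMeasure ht x
  rw [heatSG_eq_integral_heatMeasure ht]
  calc m = ∫ _, m ∂heatMeasure t x := by simp
    _ ≤ ∫ y, φ y ∂heatMeasure t x := integral_mono (integrable_const m) hφ h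

lemma abs_heatSG_rpow_le {p : ℝ} (hp : 1 ≤ p) (ht : 0 < t) (hφ : Integrable φ (heatMeasure t x))
    (hφp : Integrable (fun y ↦ |φ y| ^ p) (heatMeasure t x)) :
    |heatSG N t φ x| ^ p ≤ heatSG N t (fun y ↦ |φ y| ^ p) x := by
  have := isProbabilityMeasure_heatMeasure ht x
  simp only [heatSG_eq_integral_heatMeasure ht]
  calc |∫ y, φ y ∂heatMeasure t x| ^ p
      ≤ (∫ y, |φ y| ∂heatMeasure t x) ^ p := by
        gcongr
        exact abs_integral_le_integral_abs
    _ ≤ ∫ y, |φ y| ^ p ∂heatMeasure t x :=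
        (convexOn_rpow hp).map_integral_le
          (continuousOn_id.rpow_const fun _ _ ↦ .inr (zero_le_one.trans hp)) isClosed_Ici
          (.of_forall fun y ↦ abs_nonneg (φ y)) hφ.abs hφp

end HeatMeasure

section Semigroup

variable {N : ℕ} {r t : ℝ} {x : Eu N} {φ : Eu N → ℝ}

lemma integrable_heatKernel_sub_mul_heatKernel_sub_mul (hr : 0 < r) (ht : 0 < t)
    (hφ : Integrable φ (heatMeasure (r + t) x)) :
    Integrable (fun q : Eu N × Eu N ↦
      heatKernel r (x - q.1) * heatKernel t (q.1 - q.2) * φ q.2) (volume.prod volume) := by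
  have hφm : AEStronglyMeasurable φ volume :=
    hφ.1.mono_ac (volume_absolutelyContinuous_heatMeasure (by positivity) x)
  have hkernel : Continuous fun q : Eu N × Eu N ↦
      heatKernel r (x - q.1) * heatKernel t (q.1 - q.2) :=
    ((continuous_heatKernel r).comp (by fun_prop)).mul
      ((continuous_heatKernel t).comp (by fun_prop))
  have hmeas : AEStronglyMeasurable (fun q : Eu N × Eu N ↦
      heatKernel r (x - q.1) * heatKernel t (q.1 - q.2) * φ q.2) (volume.prod volume) :=
    hkernel.aestronglyMeasurable.mul hφm.comp_snd
  refine (integrable_prod_iff' hmeas).mpr ⟨.of_forall fun y ↦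
    (integrable_heatKernel_sub_mul_heatKernel_sub hr ht x y).mul_const (φ y), ?_⟩
  refine ((integrable_heatMeasure_iff (by positivity)).mp hφ.norm).congr (.of_forall fun y ↦ ?_)
  have hnorm (z : Eu N) : ‖heatKernel r (x - z) * heatKernel t (z - y) * φ y‖
      = heatKernel r (x - z) * heatKernel t (z - y) * ‖φ y‖ := by
    rw [norm_mul, norm_mul, Real.norm_of_nonneg (heatKernel_pos hr _).le,
      Real.norm_of_nonneg (heatKernel_pos ht _).le]
  simp only [hnorm]
  rw [integral_mul_const, integral_heatKernel_sub_mul_heatKernel_sub hr ht]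

lemma integrable_heatSG (hr : 0 < r) (ht : 0 < t) (hφ : Integrable φ (heatMeasure (r + t) x)) :
    Integrable (heatSG N t φ) (heatMeasure r x) := by
  rw [integrable_heatMeasure_iff hr]
  simpa only [mul_assoc, integral_const_mul, ← heatSG_of_pos ht] using
    (integrable_heatKernel_sub_mul_heatKernel_sub_mul hr ht hφ).integral_prod_left

lemma heatSG_heatSG (hr : 0 < r) (ht : 0 < t) (hφ : Integrable φ (heatMeasure (r + t) x)) :
    heatSG N r (heatSG N t φ) x = heatSG N (r + t) φ x := calc
  heatSG N r (heatSG N t φ) x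
    = ∫ z, ∫ y, heatKernel r (x - z) * heatKernel t (z - y) * φ y := by
        simp only [heatSG_of_pos hr, heatSG_of_pos ht, mul_assoc, integral_const_mul]
  _ = ∫ y, ∫ z, heatKernel r (x - z) * heatKernel t (z - y) * φ y :=
        integral_integral_swap (integrable_heatKernel_sub_mul_heatKernel_sub_mul hr ht hφ)
  _ = heatSG N (r + t) φ x := by
        simp only [integral_mul_const, integral_heatKernel_sub_mul_heatKernel_sub hr ht,
          heatSG_of_pos (add_pos hr ht)]

lemma abs_heatSG_le_heatSG_abs (ht : 0 < t) (φ : Eu N → ℝ) (x : Eu N) :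
    |heatSG N t φ x| ≤ heatSG N t (fun y ↦ |φ y|) x := by
  simp only [heatSG_eq_integral_heatMeasure ht]
  exact abs_integral_le_integral_abs

lemma integral_norm_heatKernel_mul (ht : 0 < t) (φ : Eu N → ℝ) (x : Eu N) :
    ∫ y, ‖heatKernel t (x - y) * φ y‖ = heatSG N t (fun y ↦ |φ y|) x := by
  simp only [norm_mul, Real.norm_of_nonneg (heatKernel_pos ht _).le, Real.norm_eq_abs,
    heatSG_of_pos ht]

end Semigroup

section Duhamel

variable {N : ℕ} {a b r t : ℝ} {x : Eu N} {F : ℝ → Eu N → ℝ} {G : Eu N → ℝ}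

lemma ae_restrict_Ioc_lt (a t : ℝ) : ∀ᵐ s ∂volume.restrict (Ioc a t), s < t := by
  rw [← restrict_Ioo_eq_restrict_Ioc]
  exact (ae_restrict_mem measurableSet_Ioo).mono fun s hs ↦ hs.2

lemma aestronglyMeasurable_heatSG_sub
    (hF : AEStronglyMeasurable (Function.uncurry F) ((volume.restrict (Ioc 0 t)).prod volume)) :
    AEStronglyMeasurable (fun q : ℝ × Eu N ↦ heatSG N (t - q.1) (F q.1) q.2)
      ((volume.restrict (Ioc 0 t)).prod volume) := by
  have hkernel : Measurable fun q : (ℝ × Eu N) × Eu N ↦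
      heatKernel (t - q.1.1) (q.1.2 - q.2) :=
    measurable_heatKernel.comp (f := fun q : (ℝ × Eu N) × Eu N ↦ (t - q.1.1, q.1.2 - q.2))
      (by fun_prop)
  have hproj : Measure.QuasiMeasurePreserving (fun q : (ℝ × Eu N) × Eu N ↦ (q.1.1, q.2))
      (((volume.restrict (Ioc 0 t)).prod volume).prod volume)
      ((volume.restrict (Ioc 0 t)).prod volume) :=
    QuasiMeasurePreserving.prodMap Measure.quasiMeasurePreserving_fst (.id volume)
  have hF' : AEStronglyMeasurable (fun q : (ℝ × Eu N) × Eu N ↦ F q.1.1 q.2)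
      (((volume.restrict (Ioc 0 t)).prod volume).prod volume) :=
    hF.comp_quasiMeasurePreserving hproj
  have hint : AEStronglyMeasurable
      (fun q : ℝ × Eu N ↦ ∫ y, heatKernel (t - q.1) (q.2 - y) * F q.1 y)
      ((volume.restrict (Ioc 0 t)).prod volume) :=
    (hkernel.aestronglyMeasurable.mul hF').integral_prod_right'
  refine hint.congr ?_
  filter_upwards [Measure.quasiMeasurePreserving_fst.ae (ae_restrict_Ioc_lt 0 t)] with q hq
  exact (heatSG_of_pos (sub_pos.mpr hq) _ _).symm

-- After averaging in `z`, `|heatSG N (t - s) (F s) z|` is controlled by the kernel at time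
-- `r + t - s ≥ r`, so its possible growth as `s → t` does not matter.
lemma integrable_heatKernel_mul_heatSG (hr : 0 < r)
    (hFm : AEStronglyMeasurable (Function.uncurry F) ((volume.restrict (Ioc 0 t)).prod volume))
    (hF : Integrable (fun q : ℝ × Eu N ↦ heatKernel (r + t - q.1) (x - q.2) * F q.1 q.2)
      ((volume.restrict (Ioc 0 t)).prod volume)) :
    Integrable (fun q : ℝ × Eu N ↦ heatKernel r (x - q.2) * heatSG N (t - q.1) (F q.1) q.2)
      ((volume.restrict (Ioc 0 t)).prod volume) := by
  have hmeas : AEStronglyMeasurable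
      (fun q : ℝ × Eu N ↦ heatKernel r (x - q.2) * heatSG N (t - q.1) (F q.1) q.2)
      ((volume.restrict (Ioc 0 t)).prod volume) :=
    ((continuous_heatKernel r).comp (by fun_prop)).aestronglyMeasurable.mul
      (aestronglyMeasurable_heatSG_sub hFm)
  have hslice : ∀ᵐ s ∂volume.restrict (Ioc 0 t),
      0 < t - s ∧ Integrable (F s) (heatMeasure (r + (t - s)) x) := by
    filter_upwards [ae_restrict_Ioc_lt 0 t, hF.prod_right_ae] with s hs hFs
    rw [add_sub_assoc] at hFs
    exact ⟨sub_pos.mpr hs, (integrable_heatMeasure_iff (by linarith)).mpr hFs⟩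
  refine (integrable_prod_iff hmeas).mpr ⟨?_, ?_⟩
  · filter_upwards [hslice] with s ⟨hts, hFs⟩
    exact (integrable_heatMeasure_iff hr).mp (integrable_heatSG hr hts hFs)
  · refine hF.norm.integral_prod_left.mono' hmeas.norm.integral_prod_right' ?_
    filter_upwards [hslice] with s ⟨hts, hFs⟩
    rw [Real.norm_of_nonneg (integral_nonneg fun _ ↦ norm_nonneg _),
      integral_norm_heatKernel_mul hr, integral_norm_heatKernel_mul (by linarith), add_sub_assoc,
      ← heatSG_heatSG hr hts hFs.abs]
    exact heatSG_mono hr (integrable_heatSG hr hts hFs).abs (integrable_heatSG hr hts hFs.abs)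
      (abs_heatSG_le_heatSG_abs hts (F s))

lemma heatSG_integral_heatSG (hr : 0 < r) (ht : 0 ≤ t)
    (hFm : AEStronglyMeasurable (Function.uncurry F) ((volume.restrict (Ioc 0 t)).prod volume))
    (hF : Integrable (fun q : ℝ × Eu N ↦ heatKernel (r + t - q.1) (x - q.2) * F q.1 q.2)
      ((volume.restrict (Ioc 0 t)).prod volume)) :
    heatSG N r (fun z ↦ ∫ s in (0 : ℝ)..t, heatSG N (t - s) (F s) z) x
      = ∫ s in (0 : ℝ)..t, heatSG N (r + t - s) (F s) x := by
  simp only [intervalIntegral.integral_of_le ht]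
  calc heatSG N r (fun z ↦ ∫ s in Ioc 0 t, heatSG N (t - s) (F s) z) x
      = ∫ z, ∫ s in Ioc 0 t, heatKernel r (x - z) * heatSG N (t - s) (F s) z := by
        simp only [heatSG_of_pos hr, integral_const_mul]
    _ = ∫ s in Ioc 0 t, heatSG N r (heatSG N (t - s) (F s)) x := by
        simp only [heatSG_of_pos hr]
        exact integral_integral_swap (integrable_heatKernel_mul_heatSG hr hFm hF).swap
    _ = ∫ s in Ioc 0 t, heatSG N (r + t - s) (F s) x := by
        refine integral_congr_ae ?_
        filter_upwards [ae_restrict_Ioc_lt 0 t, hF.prod_right_ae] with s hs hFs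
        rw [add_sub_assoc] at hFs ⊢
        exact heatSG_heatSG hr (sub_pos.mpr hs)
          ((integrable_heatMeasure_iff (by linarith)).mpr hFs)

lemma integrable_heatKernel_mul_of_abs_le (hr : 0 < r)
    (hFm : AEStronglyMeasurable (Function.uncurry F) ((volume.restrict (Ioc 0 t)).prod volume))
    (hFG : ∀ s ∈ Ioc 0 t, ∀ y, |F s y| ≤ G y) (hG : Integrable G (heatMeasure (r + t) x)) :
    Integrable (fun q : ℝ × Eu N ↦ heatKernel (r + t - q.1) (x - q.2) * F q.1 q.2)
      ((volume.restrict (Ioc 0 t)).prod volume) := by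
  rcases le_or_gt t 0 with ht | ht
  · simp [Ioc_eq_empty ht.not_gt]
  have hbound := (integrable_const (((r + t) / r) ^ ((N : ℝ) / 2))).mul_prod
    (μ := volume.restrict (Ioc 0 t)) ((integrable_heatMeasure_iff (by positivity)).mp hG)
  have hkernel : Measurable fun q : ℝ × Eu N ↦ heatKernel (r + t - q.1) (x - q.2) :=
    measurable_heatKernel.comp (f := fun q : ℝ × Eu N ↦ (r + t - q.1, x - q.2)) (by fun_prop)
  refine hbound.mono' (hkernel.aestronglyMeasurable.mul hFm) ?_
  filter_upwards [Measure.quasiMeasurePreserving_fst.ae (ae_restrict_mem measurableSet_Ioc)]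
    with ⟨s, y⟩ hs
  have hpos : 0 < heatKernel (r + t - s) (x - y) := heatKernel_pos (by linarith [hs.2]) _
  calc ‖heatKernel (r + t - s) (x - y) * F s y‖
      = heatKernel (r + t - s) (x - y) * |F s y| := by
        rw [norm_mul, Real.norm_of_nonneg hpos.le, Real.norm_eq_abs]
    _ ≤ ((r + t) / r) ^ ((N : ℝ) / 2) * heatKernel (r + t) (x - y) * G y :=
        mul_le_mul
          (heatKernel_le_of_le hr (by linarith [hs.2]) (by linarith [hs.1]) _) (hFG s hs y)
          (abs_nonneg _)
          (mul_nonneg (by positivity) (heatKernel_pos (by positivity) _).le)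
    _ = _ := mul_assoc _ _ _

lemma continuousOn_heatSG {X : Type*} [TopologicalSpace X] [FirstCountableTopology X] {S : Set X}
    {ρ : X → ℝ} {Φ : X → Eu N → ℝ} (ha : 0 < a) (hρ : ContinuousOn ρ S)
    (hρS : ∀ s ∈ S, ρ s ∈ Icc a b) (hΦm : ∀ s ∈ S, AEStronglyMeasurable (Φ s) volume)
    (hΦc : ∀ y, ContinuousOn (fun s ↦ Φ s y) S) (hΦG : ∀ s ∈ S, ∀ y, |Φ s y| ≤ G y)
    (hG : Integrable G (heatMeasure b x)) :
    ContinuousOn (fun s ↦ heatSG N (ρ s) (Φ s) x) S := by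
  have hρpos : ∀ s ∈ S, 0 < ρ s := fun s hs ↦ ha.trans_le (hρS s hs).1
  rcases S.eq_empty_or_nonempty with rfl | ⟨s₀, hs₀⟩
  · exact continuousOn_empty _
  have hb : 0 < b := (hρpos s₀ hs₀).trans_le (hρS s₀ hs₀).2
  have hbound := ((integrable_heatMeasure_iff hb).mp hG).const_mul ((b / a) ^ ((N : ℝ) / 2))
  refine (continuousOn_of_dominated (F := fun s y ↦ heatKernel (ρ s) (x - y) * Φ s y)
    (fun s hs ↦ ?_) (fun s hs ↦ .of_forall fun y ↦ ?_) hbound (.of_forall fun y ↦ ?_)).congr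
    fun s hs ↦ heatSG_of_pos (hρpos s hs) _ _
  · exact ((continuous_heatKernel _).comp (by fun_prop)).aestronglyMeasurable.mul (hΦm s hs)
  · have hpos := heatKernel_pos (hρpos s hs) (x - y)
    rw [norm_mul, Real.norm_of_nonneg hpos.le, Real.norm_eq_abs, ← mul_assoc]
    exact mul_le_mul (heatKernel_le_of_le ha (hρS s hs).1 (hρS s hs).2 _) (hΦG s hs y)
      (abs_nonneg _) (hpos.le.trans (heatKernel_le_of_le ha (hρS s hs).1 (hρS s hs).2 _))
  · have hkernel : ContinuousOn (fun s ↦ heatKernel (ρ s) (x - y)) S := fun s hs ↦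
      (continuousAt_heatKernel (hρpos s hs) (x - y)).comp_continuousWithinAt (hρ s hs)
    exact hkernel.mul (hΦc y)

end Duhamel

section Comparison

variable {p a b : ℝ} {f f' : ℝ → ℝ}

lemma mul_sub_le_sub_of_le_hasDerivAt {C : ℝ} (hab : a ≤ b) (hf : ContinuousOn f (Icc a b))
    (hderiv : ∀ t ∈ Ioo a b, HasDerivAt f (f' t) t) (hle : ∀ t ∈ Ioo a b, C ≤ f' t) :
    C * (b - a) ≤ f b - f a := by
  refine (convex_Icc a b).mul_sub_le_image_sub_of_le_deriv hf ?_ ?_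
    a (left_mem_Icc.mpr hab) b (right_mem_Icc.mpr hab) hab
  · rw [interior_Icc]
    exact fun t ht ↦ (hderiv t ht).differentiableAt.differentiableWithinAt
  · rw [interior_Icc]
    exact fun t ht ↦ (hle t ht).trans_eq (hderiv t ht).deriv.symm

lemma sub_one_mul_sub_lt_rpow_of_rpow_le_hasDerivAt (hp : 1 < p) (hab : a ≤ b)
    (hf : ContinuousOn f (Icc a b)) (hderiv : ∀ t ∈ Ioo a b, HasDerivAt f (f' t) t)
    (hle : ∀ t ∈ Ioo a b, |f t| ^ p ≤ f' t) (ha : 0 < f a) :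
    (p - 1) * (b - a) < f a ^ (1 - p) := by
  have hpos (t) (ht : t ∈ Icc a b) : 0 < f t := by
    have := mul_sub_le_sub_of_le_hasDerivAt (C := 0) ht.1 (hf.mono (Icc_subset_Icc_right ht.2))
      (fun s hs ↦ hderiv s (Ioo_subset_Ioo_right ht.2 hs))
      fun s hs ↦ le_trans (by positivity) (hle s (Ioo_subset_Ioo_right ht.2 hs))
    linarith
  have hslope (t) (ht : t ∈ Ioo a b) : p - 1 ≤ -(f' t * (1 - p) * f t ^ (1 - p - 1)) := by
    have hft := hpos t (Ioo_subset_Icc_self ht)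
    have hone : 1 ≤ f' t * f t ^ (-p) := calc
      1 = f t ^ p * f t ^ (-p) := by rw [← Real.rpow_add hft, add_neg_cancel, Real.rpow_zero]
      _ ≤ f' t * f t ^ (-p) := by
        gcongr
        simpa only [abs_of_pos hft] using hle t ht
    rw [show 1 - p - 1 = -p by ring]
    nlinarith
  have hdrop : (p - 1) * (b - a) ≤ -f b ^ (1 - p) - -f a ^ (1 - p) :=
    mul_sub_le_sub_of_le_hasDerivAt hab (hf.rpow_const fun t ht ↦ .inl (hpos t ht).ne').neg
      (fun t ht ↦ ((hderiv t ht).rpow_const (.inl (hpos t (Ioo_subset_Icc_self ht)).ne')).neg)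
      hslope
  linarith [Real.rpow_pos_of_pos (hpos b (right_mem_Icc.mpr hab)) (1 - p)]

-- The forcing `A` lifts `f` above `m + A` during `[T - 2, T - 1]`, and the power term alone is
-- then too strong for `f` to survive on `[T - 1, T]`.
lemma sub_one_lt_rpow_of_rpow_add_le_hasDerivAt {m A T : ℝ} (hp : 1 < p) (hT : 2 ≤ T)
    (hf : ContinuousOn f (Icc 0 T)) (hderiv : ∀ t ∈ Ioo 0 T, HasDerivAt f (f' t) t)
    (hle : ∀ t ∈ Ioo 0 T, |f t| ^ p ≤ f' t)
    (hforced : ∀ t ∈ Ioo (T - 2) T, |f t| ^ p + A ≤ f' t) (hm : m ≤ f 0) (hmA : 0 < m + A) :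
    p - 1 < (m + A) ^ (1 - p) := by
  have hearly : 0 * (T - 2 - 0) ≤ f (T - 2) - f 0 :=
    mul_sub_le_sub_of_le_hasDerivAt (by linarith) (hf.mono (Icc_subset_Icc_right (by linarith)))
      (fun t ht ↦ hderiv t ⟨ht.1, by linarith [ht.2]⟩)
      fun t ht ↦ le_trans (by positivity) (hle t ⟨ht.1, by linarith [ht.2]⟩)
  have hlift : A * (T - 1 - (T - 2)) ≤ f (T - 1) - f (T - 2) :=
    mul_sub_le_sub_of_le_hasDerivAt (by linarith)
      (hf.mono (Icc_subset_Icc (by linarith) (by linarith)))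
      (fun t ht ↦ hderiv t ⟨by linarith [ht.1], by linarith [ht.2]⟩)
      fun t ht ↦ le_trans (le_add_of_nonneg_left (by positivity))
        (hforced t ⟨ht.1, by linarith [ht.2]⟩)
  have hlarge : m + A ≤ f (T - 1) := by linarith
  have hsurvive : (p - 1) * (T - (T - 1)) < f (T - 1) ^ (1 - p) :=
    sub_one_mul_sub_lt_rpow_of_rpow_le_hasDerivAt hp (by linarith)
      (hf.mono (Icc_subset_Icc_left (by linarith)))
      (fun t ht ↦ hderiv t ⟨by linarith [ht.1], ht.2⟩)
      (fun t ht ↦ hle t ⟨by linarith [ht.1], ht.2⟩) (hmA.trans_le hlarge)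
  calc p - 1 = (p - 1) * (T - (T - 1)) := by ring
    _ < f (T - 1) ^ (1 - p) := hsurvive
    _ ≤ (m + A) ^ (1 - p) := Real.rpow_le_rpow_of_nonpos hmA hlarge (by linarith)

end Comparison

section MildSolution

variable {N : ℕ} {p σ r t T τ : ℝ} {u₀ w : Eu N → ℝ} {u : ℝ → C₀(Eu N, ℝ)} {x : Eu N}

lemma abs_apply_le_norm (v : C₀(Eu N, ℝ)) (y : Eu N) : |v y| ≤ ‖v‖ :=
  v.toBCF.norm_coe_le_norm y

lemma integrable_heatMeasure_zeroAtInfty (ht : 0 < t) (v : C₀(Eu N, ℝ)) (x : Eu N) :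
    Integrable v (heatMeasure t x) :=
  have := isProbabilityMeasure_heatMeasure ht x
  v.toBCF.integrable _

lemma integrable_heatMeasure_abs_rpow (ht : 0 < t) (hp : 0 ≤ p) (v : C₀(Eu N, ℝ)) (x : Eu N) :
    Integrable (fun y ↦ |v y| ^ p) (heatMeasure t x) := by
  have := isProbabilityMeasure_heatMeasure ht x
  refine .of_bound (C := ‖v‖ ^ p)
    (v.continuous.abs.rpow_const fun _ ↦ .inr hp).aestronglyMeasurable (.of_forall fun y ↦ ?_)
  rw [Real.norm_of_nonneg (by positivity)]
  gcongr
  exact abs_apply_le_norm v y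

lemma continuousOn_apply_apply {S : Set ℝ} (hu : ContinuousOn u S) :
    ContinuousOn (fun q : ℝ × Eu N ↦ u q.1 q.2) (S ×ˢ univ) := by
  have hbcf : ContinuousOn (fun q : ℝ × Eu N ↦ (u q.1).toBCF) (S ×ˢ univ) :=
    (ZeroAtInftyContinuousMap.isometry_toBCF.continuous.comp_continuousOn hu).comp
      continuousOn_fst fun _ hq ↦ hq.1
  exact hbcf.eval continuousOn_snd

/-- The source term `|u|^p + t^σ w` of the equation, as a function of time and space. -/
def mildSource (p σ : ℝ) (u : ℝ → C₀(Eu N, ℝ)) (w : Eu N → ℝ) (s : ℝ) (y : Eu N) : ℝ :=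
  |u s y| ^ p + s ^ σ * w y

lemma continuousOn_mildSource (hp : 0 ≤ p) (hσ : 0 ≤ σ) (hu : ContinuousOn u (Icc 0 T)) (y : Eu N) :
    ContinuousOn (fun s ↦ mildSource p σ u w s y) (Icc 0 T) := by
  have huy : ContinuousOn (fun s ↦ u s y) (Icc 0 T) :=
    (continuousOn_apply_apply hu).comp (by fun_prop : ContinuousOn (fun s ↦ (s, y)) (Icc 0 T))
      fun s hs ↦ ⟨hs, mem_univ y⟩
  exact (huy.abs.rpow_const fun _ _ ↦ .inr hp).add
    ((continuousOn_id.rpow_const fun _ _ ↦ .inr hσ).mul continuousOn_const)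

lemma aestronglyMeasurable_mildSource (hp : 0 ≤ p) (hw : AEStronglyMeasurable w) (s : ℝ) :
    AEStronglyMeasurable (mildSource p σ u w s) :=
  ((u s).continuous.abs.rpow_const fun _ ↦ .inr hp).aestronglyMeasurable.add (hw.const_mul _)

lemma aestronglyMeasurable_uncurry_mildSource (hp : 0 ≤ p) (hu : ContinuousOn u (Icc 0 t))
    (hw : AEStronglyMeasurable w) :
    AEStronglyMeasurable (Function.uncurry (mildSource p σ u w))
      ((volume.restrict (Ioc 0 t)).prod volume) := by
  have hu' : AEStronglyMeasurable (fun q : ℝ × Eu N ↦ |u q.1 q.2| ^ p)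
      ((volume.restrict (Ioc 0 t)).prod volume) := by
    have hcont : ContinuousOn (fun q : ℝ × Eu N ↦ |u q.1 q.2| ^ p) (Ioc 0 t ×ˢ univ) :=
      (continuousOn_apply_apply (hu.mono Ioc_subset_Icc_self)).abs.rpow_const fun _ _ ↦ .inr hp
    rw [← Measure.restrict_univ (μ := (volume : Measure (Eu N))), Measure.prod_restrict]
    exact hcont.aestronglyMeasurable (measurableSet_Ioc.prod .univ)
  have hpow : Measurable fun q : ℝ × Eu N ↦ q.1 ^ σ := by fun_prop
  exact hu'.add (hpow.aestronglyMeasurable.mul hw.comp_snd)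

lemma exists_abs_mildSource_le (hp : 0 ≤ p) (hσ : 0 ≤ σ) (hu : ContinuousOn u (Icc 0 T))
    (w : Eu N → ℝ) :
    ∃ B, ∀ s ∈ Icc 0 T, ∀ y, |mildSource p σ u w s y| ≤ B + T ^ σ * |w y| := by
  obtain ⟨C, hC⟩ := isCompact_Icc.exists_bound_of_continuousOn hu
  refine ⟨C ^ p, fun s hs y ↦ ?_⟩
  have hs₀ : 0 ≤ s := hs.1
  calc |mildSource p σ u w s y| ≤ |u s y| ^ p + s ^ σ * |w y| := by
        refine (abs_add_le _ _).trans_eq ?_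
        rw [abs_mul, abs_of_nonneg (Real.rpow_nonneg (abs_nonneg _) _),
          abs_of_nonneg (Real.rpow_nonneg hs₀ _)]
    _ ≤ C ^ p + T ^ σ * |w y| := by
        gcongr
        · exact (abs_apply_le_norm _ y).trans (hC s hs)
        · exact hs.2

lemma integrable_heatMeasure_const_add_mul_abs (hw : Integrable w) (ht : 0 < t) (B C : ℝ)
    (x : Eu N) : Integrable (fun y ↦ B + C * |w y|) (heatMeasure t x) :=
  have := isProbabilityMeasure_heatMeasure ht x
  (integrable_const B).add ((integrable_heatMeasure_of_integrable hw ht x).abs.const_mul C)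

lemma continuousOn_heatSG_mildSource (hp : 0 ≤ p) (hσ : 0 ≤ σ) (hw : Integrable w) (hτ : T < τ)
    (hu : ContinuousOn u (Icc 0 T)) (x : Eu N) :
    ContinuousOn (fun s ↦ heatSG N (τ - s) (mildSource p σ u w s) x) (Icc 0 T) := by
  obtain ⟨B, hB⟩ := exists_abs_mildSource_le hp hσ hu w
  rcases lt_or_ge T 0 with hT | hT
  · simp [Icc_eq_empty hT.not_ge]
  exact continuousOn_heatSG (sub_pos.mpr hτ) (by fun_prop)
    (fun s hs ↦ ⟨by linarith [hs.2], by linarith [hs.1]⟩)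
    (fun s _ ↦ aestronglyMeasurable_mildSource hp hw.1 s) (continuousOn_mildSource hp hσ hu) hB
    (integrable_heatMeasure_const_add_mul_abs hw (hT.trans_lt hτ) _ _ x)

lemma abs_heatSG_rpow_add_le_heatSG_mildSource (hp : 1 ≤ p) (hw : Integrable w) (hr : 0 < r)
    (u : ℝ → C₀(Eu N, ℝ)) (s : ℝ) (x : Eu N) :
    |heatSG N r (u s) x| ^ p + s ^ σ * heatSG N r w x ≤ heatSG N r (mildSource p σ u w s) x := by
  have hp₀ : 0 ≤ p := zero_le_one.trans hp
  have hup := integrable_heatMeasure_abs_rpow hr hp₀ (u s) x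
  have hsource : heatSG N r (mildSource p σ u w s) x
      = heatSG N r (fun y ↦ |u s y| ^ p) x + s ^ σ * heatSG N r w x := by
    rw [show mildSource p σ u w s = (fun y ↦ |u s y| ^ p) + fun y ↦ s ^ σ * w y from rfl,
      heatSG_add hr hup ((integrable_heatMeasure_of_integrable hw hr x).const_mul _),
      heatSG_const_mul]
  rw [hsource]
  gcongr
  exact abs_heatSG_rpow_le hp hr (integrable_heatMeasure_zeroAtInfty hr (u s) x) hup

namespace IsMildSolution

lemma apply_zero (hu : IsMildSolution N p σ u₀ w T u) (hT : 0 ≤ T) : ⇑(u 0) = u₀ := by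
  ext x
  simpa [heatSG_of_nonpos le_rfl] using hu.2 0 (left_mem_Icc.mpr hT) x

-- Averaging the Duhamel formula at time `t` with the kernel at time `r` turns every
-- `heatSG N (t - s)` into `heatSG N (r + t - s)`, which is regular up to `s = t`.
lemma heatSG_eq (hu : IsMildSolution N p σ u₀ w T u) (hp : 0 ≤ p) (hσ : 0 ≤ σ)
    (hw : Integrable w) (hr : 0 < r) (ht : t ∈ Icc 0 T) (x : Eu N) :
    heatSG N r (u t) x = heatSG N (r + t) u₀ x
      + ∫ s in (0 : ℝ)..t, heatSG N (r + t - s) (mildSource p σ u w s) x := by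
  have hu₀ : ⇑(u 0) = u₀ := hu.apply_zero (ht.1.trans ht.2)
  rcases ht.1.eq_or_lt with rfl | htpos
  · simp [hu₀]
  have hτ : 0 < r + t := by positivity
  have hut : ContinuousOn u (Icc 0 t) := hu.1.mono (Icc_subset_Icc_right ht.2)
  obtain ⟨B, hB⟩ := exists_abs_mildSource_le hp hσ hut w
  have hmeas := aestronglyMeasurable_uncurry_mildSource (σ := σ) hp hut hw.1
  have hsource := integrable_heatKernel_mul_of_abs_le hr hmeas
    (fun s hs ↦ hB s (Ioc_subset_Icc_self hs))
    (integrable_heatMeasure_const_add_mul_abs hw hτ _ _ x)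
  have hu₀r : Integrable u₀ (heatMeasure (r + t) x) :=
    hu₀ ▸ integrable_heatMeasure_zeroAtInfty hτ (u 0) x
  have hfree : Integrable (heatSG N t u₀) (heatMeasure r x) := integrable_heatSG hr htpos hu₀r
  have hmild : ⇑(u t) = heatSG N t u₀
      + fun z ↦ ∫ s in (0 : ℝ)..t, heatSG N (t - s) (mildSource p σ u w s) z :=
    funext (hu.2 t ht)
  have hforced : Integrable (fun z ↦ ∫ s in (0 : ℝ)..t, heatSG N (t - s) (mildSource p σ u w s) z)
      (heatMeasure r x) := by
    rw [← sub_eq_iff_eq_add'.mpr hmild]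
    exact (integrable_heatMeasure_zeroAtInfty hr (u t) x).sub hfree
  rw [hmild, heatSG_add hr hfree hforced, heatSG_heatSG hr htpos hu₀r,
    heatSG_integral_heatSG hr ht.1 hmeas hsource]

lemma heatSG_sub_eq (hu : IsMildSolution N p σ u₀ w T u) (hp : 0 ≤ p) (hσ : 0 ≤ σ)
    (hw : Integrable w) (hτ : T < τ) (ht : t ∈ Icc 0 T) (x : Eu N) :
    heatSG N (τ - t) (u t) x = heatSG N τ u₀ x
      + ∫ s in (0 : ℝ)..t, heatSG N (τ - s) (mildSource p σ u w s) x := by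
  simpa only [sub_add_cancel] using
    hu.heatSG_eq hp hσ hw (sub_pos.mpr (ht.2.trans_lt hτ)) ht x

lemma continuousOn_heatSG_sub (hu : IsMildSolution N p σ u₀ w T u) (hp : 0 ≤ p) (hσ : 0 ≤ σ)
    (hw : Integrable w) (hτ : T < τ) (x : Eu N) :
    ContinuousOn (fun t ↦ heatSG N (τ - t) (u t) x) (Icc 0 T) := by
  rcases lt_or_ge T 0 with hT | hT
  · simp [Icc_eq_empty hT.not_ge]
  have hint := (continuousOn_heatSG_mildSource hp hσ hw hτ hu.1 x).intervalIntegrable_of_Icc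
    (μ := volume) hT
  have hprim := intervalIntegral.continuousOn_primitive_interval' hint left_mem_uIcc
  rw [uIcc_of_le hT] at hprim
  exact (continuousOn_const.add hprim).congr fun t ht ↦ hu.heatSG_sub_eq hp hσ hw hτ ht x

lemma hasDerivAt_heatSG_sub (hu : IsMildSolution N p σ u₀ w T u) (hp : 0 ≤ p) (hσ : 0 ≤ σ)
    (hw : Integrable w) (hτ : T < τ) (ht : t ∈ Ioo 0 T) (x : Eu N) :
    HasDerivAt (fun t ↦ heatSG N (τ - t) (u t) x)
      (heatSG N (τ - t) (mildSource p σ u w t) x) t := by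
  have hcont := continuousOn_heatSG_mildSource hp hσ hw hτ hu.1 x
  have hnhds : Icc 0 T ∈ nhds t := Icc_mem_nhds ht.1 ht.2
  have hint := (hcont.mono (Icc_subset_Icc_right ht.2.le)).intervalIntegrable_of_Icc
    (μ := volume) ht.1.le
  have hmeas := (hcont.mono Ioo_subset_Icc_self).stronglyMeasurableAtFilter (μ := volume)
    isOpen_Ioo t ht
  refine ((intervalIntegral.integral_hasDerivAt_right hint hmeas
    (hcont.continuousAt hnhds)).const_add (heatSG N τ u₀ x)).congr_of_eventuallyEq ?_
  filter_upwards [hnhds] with s hs using hu.heatSG_sub_eq hp hσ hw hτ hs x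

-- On `[0, T]` the time argument of `heatSG N (R + T - t) w` stays above `R`, where it is positive;
-- on `[T - 2, T]` it stays in `[R, R + 2]`, so that the forcing is at least `(T - 2) ^ σ * c`.
lemma sub_one_lt_rpow_of_le_heatSG (hu : IsMildSolution N p σ u₀ w T u) (hp : 1 < p) (hσ : 0 ≤ σ)
    (hw : Integrable w) {R c m : ℝ} (hR : 0 < R) (hpos : ∀ r ≥ R, 0 < heatSG N r w x)
    (hc₀ : 0 ≤ c) (hc : ∀ r ∈ Icc R (R + 2), c ≤ heatSG N r w x) (hm : ∀ y, m ≤ u 0 y) (hT : 2 ≤ T)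
    (hmA : 0 < m + (T - 2) ^ σ * c) :
    p - 1 < (m + (T - 2) ^ σ * c) ^ (1 - p) := by
  have hp₀ : 0 ≤ p := by linarith
  have hτ : T < R + T := by linarith
  have hderiv (t) (ht : t ∈ Ioo 0 T) : |heatSG N (R + T - t) (u t) x| ^ p
      + t ^ σ * heatSG N (R + T - t) w x ≤ heatSG N (R + T - t) (mildSource p σ u w t) x :=
    abs_heatSG_rpow_add_le_heatSG_mildSource hp.le hw (by linarith [ht.2]) u t x
  refine sub_one_lt_rpow_of_rpow_add_le_hasDerivAt hp hT
    (hu.continuousOn_heatSG_sub hp₀ hσ hw hτ x)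
    (fun t ht ↦ hu.hasDerivAt_heatSG_sub hp₀ hσ hw hτ ht x) (fun t ht ↦ ?_) (fun t ht ↦ ?_)
    (le_heatSG (by linarith) (integrable_heatMeasure_zeroAtInfty (by linarith) (u 0) x) hm) hmA
  · exact le_trans (le_add_of_nonneg_right (mul_nonneg (Real.rpow_nonneg ht.1.le σ)
      (hpos _ (by linarith [ht.2])).le)) (hderiv t ht)
  · refine le_trans ?_ (hderiv t ⟨by linarith [ht.1], ht.2⟩)
    have hT₀ : 0 ≤ T - 2 := by linarith
    have ht₀ : 0 ≤ t := hT₀.trans ht.1.le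
    have hct := hc (R + T - t) ⟨by linarith [ht.2], by linarith [ht.1]⟩
    gcongr
    exact ht.1.le

end IsMildSolution

end MildSolution

section Positivity

variable {N : ℕ} {w : Eu N → ℝ}

lemma tendsto_integral_exp_mul (hw : Integrable w) (x : Eu N) :
    Tendsto (fun r : ℝ ↦ ∫ y, Real.exp (-‖x - y‖ ^ 2 / (4 * r)) * w y) atTop
      (nhds (∫ y, w y)) := by
  refine tendsto_integral_filter_of_dominated_convergence (fun y ↦ ‖w y‖) ?_ ?_ hw.norm ?_
  · exact .of_forall fun r ↦
      (by fun_prop : Continuous fun y ↦ Real.exp (-‖x - y‖ ^ 2 / (4 * r))).aestronglyMeasurable.mul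
        hw.1
  · filter_upwards [eventually_gt_atTop 0] with r hr
    refine .of_forall fun y ↦ ?_
    rw [norm_mul, Real.norm_of_nonneg (Real.exp_nonneg _)]
    refine mul_le_of_le_one_left (norm_nonneg _) (Real.exp_le_one_iff.mpr ?_)
    rw [neg_div, neg_nonpos]
    positivity
  · refine .of_forall fun y ↦ ?_
    have hexp : Tendsto (fun r : ℝ ↦ -‖x - y‖ ^ 2 / (4 * r)) atTop (nhds 0) :=
      (tendsto_id.const_mul_atTop four_pos).const_div_atTop _
    simpa using (hexp.rexp).mul_const (w y)

lemma exists_forall_ge_heatSG_pos (hw : Integrable w) (hpos : 0 < ∫ y, w y) (x : Eu N) :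
    ∃ R > 0, ∀ r ≥ R, 0 < heatSG N r w x := by
  obtain ⟨R, hR⟩ := eventually_atTop.mp <| (eventually_gt_atTop 0).and <|
    (tendsto_integral_exp_mul hw x).eventually_const_lt hpos
  refine ⟨R, (hR R le_rfl).1, fun r hr ↦ ?_⟩
  obtain ⟨hr₀, hint⟩ := hR r hr
  simp only [heatSG_of_pos hr₀, heatKernel, mul_assoc, integral_const_mul] at hint ⊢
  positivity

lemma continuousOn_heatSG_Icc (hw : Integrable w) {a : ℝ} (ha : 0 < a) (b : ℝ) (x : Eu N) :
    ContinuousOn (fun r ↦ heatSG N r w x) (Icc a b) := by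
  rcases lt_or_ge b a with hba | hab
  · simp [Icc_eq_empty hba.not_ge]
  exact continuousOn_heatSG ha continuousOn_id (fun _ h ↦ h) (fun _ _ ↦ hw.1)
    (fun _ ↦ continuousOn_const) (fun _ _ _ ↦ le_rfl)
    (integrable_heatMeasure_of_integrable hw (ha.trans_le hab) x).abs

lemma exists_pos_le_heatSG (hw : Integrable w) {a : ℝ} (ha : 0 < a) (b : ℝ) {x : Eu N}
    (hpos : ∀ r ∈ Icc a b, 0 < heatSG N r w x) :
    ∃ c > 0, ∀ r ∈ Icc a b, c ≤ heatSG N r w x :=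
  isCompact_Icc.exists_forall_le' (continuousOn_heatSG_Icc hw ha b x) hpos

end Positivity

lemma eventually_rpow_lt_of_tendsto_atTop {A : ℝ → ℝ} (hA : Tendsto A atTop atTop) {p : ℝ}
    (hp : 1 < p) : ∀ᶠ T in atTop, 0 < A T ∧ A T ^ (1 - p) < p - 1 := by
  have hzero : Tendsto (fun T ↦ A T ^ (1 - p)) atTop (nhds 0) := by
    simpa only [neg_sub, Function.comp_def] using (tendsto_rpow_neg_atTop (sub_pos.mpr hp)).comp hA
  exact (hA.eventually_gt_atTop 0).and (hzero.eventually_lt_const (sub_pos.mpr hp))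

theorem blowup_pos_sigma_general (N : ℕ) (σ p : ℝ) (hσ : 0 < σ) (hp1 : 1 < p) (w : Eu N → ℝ)
    (hwI : Integrable w) (hwpos : 0 < ∫ x, w x) (u₀ : Eu N → ℝ) :
    ∀ᶠ T in atTop, ∀ u : ℝ → C₀(Eu N, ℝ), ¬ IsMildSolution N p σ u₀ w T u := by
  by_cases hu₀ : ∃ v : C₀(Eu N, ℝ), ⇑v = u₀
  · obtain ⟨v, rfl⟩ := hu₀
    obtain ⟨R, hRpos, hR⟩ := exists_forall_ge_heatSG_pos hwI hwpos 0
    obtain ⟨c, hc₀, hc⟩ := exists_pos_le_heatSG hwI hRpos (R + 2) fun r hr ↦ hR r hr.1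
    have hA : Tendsto (fun T : ℝ ↦ -‖v‖ + (T - 2) ^ σ * c) atTop atTop :=
      tendsto_const_nhds.add_atTop (((tendsto_rpow_atTop hσ).comp
        (tendsto_atTop_add_const_right atTop (-2) tendsto_id)).atTop_mul_const hc₀)
    filter_upwards [eventually_ge_atTop 2, eventually_rpow_lt_of_tendsto_atTop hA hp1]
      with T hT ⟨hApos, hAlt⟩ u hu
    have hv (y : Eu N) : -‖v‖ ≤ u 0 y := by
      rw [hu.apply_zero (zero_le_two.trans hT)]
      exact (abs_le.mp (abs_apply_le_norm v y)).1
    exact hAlt.not_gt (hu.sub_one_lt_rpow_of_le_heatSG hp1 hσ.le hwI hRpos hR hc₀.le hc hv hT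
      hApos)
  · filter_upwards [eventually_ge_atTop 0] with T hT u hu
    exact hu₀ ⟨u 0, hu.apply_zero hT⟩

/-- Blow-up for every p > 1 when σ > 0: no global mild solution. -/
theorem blowup_pos_sigma
    (N : ℕ) (hN : 2 ≤ N) (σ p α : ℝ)
    (hσ : 0 < σ) (hp1 : 1 < p)
    (hα : α ∈ Set.Ioo (0 : ℝ) 1)
    (w : Eu N → ℝ) (hwH : IsHolder α w) (hwC : IsC0 w) (hwI : Integrable w)
    (hwpos : 0 < ∫ x, w x)
    (u₀ : Eu N → ℝ) (hu₀ : IsC0 u₀) :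
    ¬ ∃ u : ℝ → C₀(Eu N, ℝ), IsGlobalMildSolution N p σ u₀ w u := by
  rintro ⟨u, hcont, hu⟩
  obtain ⟨T, hT⟩ := (blowup_pos_sigma_general N σ p hσ hp1 w hwI hwpos u₀).exists
  exact hT u ⟨hcont.mono Icc_subset_Ici_self, fun t ht ↦ hu t ht.1⟩

end
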